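/- There is an absolute constant c > 0 with the following property. Let r, m, k be positive integers with k < m/2 and with r > 1 or k > 1, and let n = C(m,k)^r. Let W = S_m ≀ S_r act on Ω = Δ^r (Δ the set of k-element subsets of {1,...,m}) and imprimitively on rm letters as usual. Then for every non-identity g ∈ W, ind(g) ≥ c · √n · ind'(g), where ind(g) is the index of g on Ω and ind'(g) is the index of g on the rm letters. -/

import Mathlib

open scoped Classical
open Polynomial

/-- The index `ind(g)` of a permutation `g` of a finite set `Ω`: `|Ω|` minus the number
of orbits of the cyclic group generated by `g` on `Ω`. -/
noncomputable def permIndex {Ω : Type*} [Fintype Ω] (g : Equiv.Perm Ω) : ℕ :=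
  Fintype.card Ω - Nat.card (MulAction.orbitRel.Quotient (Subgroup.zpowers g) Ω)

/-- The index `ind(G)` of a permutation group `G ≤ Perm Ω`: the minimum of `ind(g)` over
non-identity `g ∈ G`. -/
noncomputable def groupIndex {Ω : Type*} [Fintype Ω] (G : Subgroup (Equiv.Perm Ω)) : ℕ :=
  sInf {k | ∃ g ∈ G, g ≠ 1 ∧ permIndex g = k}

/-- The permutation of the `k`-element subsets of `{1,...,m}` induced by a permutation
`s` of `{1,...,m}`. -/
def subsetPerm (m k : ℕ) (s : Equiv.Perm (Fin m)) :
    Equiv.Perm {S : Finset (Fin m) // S.card = k} :=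
  Equiv.Perm.subtypePerm (s.finsetCongr)
    (fun S => by simp [Equiv.finsetCongr_apply, Finset.card_map])

/-- The element of the wreath product `S_m ≀ S_r` given by `(σ_1, ..., σ_r; τ)`, acting
on `Ω = Δ^r`, where `Δ` is the set of `k`-element subsets of `{1,...,m}`: the `i`-th
copy of `S_m` acts on the `i`-th coordinate through its action on `k`-subsets, and `S_r`
permutes the coordinates. -/
def wreathOnSets (r m k : ℕ) (σ : Fin r → Equiv.Perm (Fin m)) (τ : Equiv.Perm (Fin r)) :
    Equiv.Perm (Fin r → {S : Finset (Fin m) // S.card = k}) :=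
  Equiv.piCongr τ (fun i => subsetPerm m k (σ i))

/-- The element of the wreath product `S_m ≀ S_r` given by `(σ_1, ..., σ_r; τ)`, acting
imprimitively on the disjoint union of `r` copies of `{1,...,m}` (that is, `rm`
letters) in the natural way. -/
def wreathOnLetters (r m : ℕ) (σ : Fin r → Equiv.Perm (Fin m)) (τ : Equiv.Perm (Fin r)) :
    Equiv.Perm (Fin r × Fin m) :=
  Equiv.prodShear τ σ

/-!
A permutation has index between half the number of points it moves and that number, since this holds
orbit by orbit, so it suffices to compare numbers of moved points.

If the top component `τ` moves a coordinate `i`, a fixed point of `g` in `Δ ^ r` is determined by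
its coordinates other than `τ i`, so `g` moves at least half of the `n` points, while there are only
`r * m` letters. If `τ = 1`, each base component `σ i` contributes separately. Counting the pairs
`(x, S)` with `x ∈ S` and `σ i x ∉ S` shows that the proportion of `k`-subsets moved by `σ i` is at
least `1 / (2 * (m - 1))` times the number of letters it moves, and `g` moves at least that same
proportion of `Δ ^ r`.

Either way `n` times the number of moved letters is at most `2 * (m * r)` times the number of moved
points of `Δ ^ r`. Finally `m * r ≤ 3 * √n`, because `n ≥ m ^ r` grows fast enough for `r > 1`, and
`n ≥ m.choose 2` for `r = 1`.
-/

section WreathIndex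

open Equiv Finset

/-- The quotient map from `Ω` to the set of orbits of the cyclic group generated by `g`. -/
def orbitClass {Ω : Type*} (g : Perm Ω) :
    Ω → MulAction.orbitRel.Quotient (Subgroup.zpowers g) Ω :=
  Quotient.mk''

section Index

variable {Ω : Type*} (g : Perm Ω)

theorem orbitClass_eq_iff_sameCycle {x y : Ω} :
    orbitClass g x = orbitClass g y ↔ g.SameCycle y x := by
  rw [orbitClass, Quotient.eq'', MulAction.orbitRel_apply, MulAction.mem_orbit_iff,
    Subgroup.exists_zpowers]
  rfl

theorem card_eq_sum_card_filter_orbitClass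
    [Fintype (MulAction.orbitRel.Quotient (Subgroup.zpowers g) Ω)] (s : Finset Ω) :
    #s = ∑ q, #{y ∈ s | orbitClass g y = q} :=
  card_eq_sum_card_fiberwise fun _ _ ↦ mem_coe.2 (mem_univ _)

variable [Fintype Ω] [DecidableEq Ω]

theorem card_filter_orbitClass_le (x : Ω) :
    #{y | orbitClass g y = orbitClass g x} ≤
      #{y ∈ g.support | orbitClass g y = orbitClass g x} + 1 := by
  simp only [orbitClass_eq_iff_sameCycle]
  by_cases hx : g x = x
  · have hsingle : ({y | g.SameCycle x y} : Finset Ω) ⊆ {x} := fun y hy ↦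
      mem_singleton.2 ((mem_filter.1 hy).2.eq_of_left hx).symm
    exact (card_le_card hsingle).trans (by simp)
  · refine (card_le_card fun y hy ↦ ?_).trans (Nat.le_succ _)
    have hxy := (mem_filter.1 hy).2
    exact mem_filter.2 ⟨Perm.mem_support.2 fun hy ↦ hx (hxy.apply_eq_self_iff.2 hy), hxy⟩

theorem card_support_filter_orbitClass_add_two_le (x : Ω) :
    #{y ∈ g.support | orbitClass g y = orbitClass g x} + 2 ≤
      2 * #{y | orbitClass g y = orbitClass g x} := by
  simp only [orbitClass_eq_iff_sameCycle]
  have hle : #{y ∈ g.support | g.SameCycle x y} ≤ #{y | g.SameCycle x y} :=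
    card_le_card (filter_subset_filter _ (subset_univ _))
  by_cases hx : g x = x
  · have hempty : #{y ∈ g.support | g.SameCycle x y} = 0 :=
      card_eq_zero.2 <| filter_eq_empty_iff.2 fun y hy hxy ↦
        Perm.mem_support.1 hy (hxy.apply_eq_self_iff.1 hx)
    have hpos : 0 < #{y | g.SameCycle x y} :=
      card_pos.2 ⟨x, mem_filter.2 ⟨mem_univ x, .refl g x⟩⟩
    omega
  · have htwo : 1 < #{y | g.SameCycle x y} :=
      one_lt_card.2 ⟨x, mem_filter.2 ⟨mem_univ x, .refl g x⟩, g x,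
        mem_filter.2 ⟨mem_univ _, Perm.sameCycle_apply_right.2 (.refl g x)⟩, Ne.symm hx⟩
    omega

theorem permIndex_le_card_support : permIndex g ≤ #g.support := by
  let _ := Fintype.ofFinite (MulAction.orbitRel.Quotient (Subgroup.zpowers g) Ω)
  rw [permIndex, tsub_le_iff_right, ← card_univ, Nat.card_eq_fintype_card,
    card_eq_sum_card_filter_orbitClass g univ, card_eq_sum_card_filter_orbitClass g g.support,
    Fintype.card_eq_sum_ones, ← sum_add_distrib]
  exact sum_le_sum fun q _ ↦ Quotient.inductionOn' q (card_filter_orbitClass_le g)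

theorem card_support_le_two_mul_permIndex : #g.support ≤ 2 * permIndex g := by
  let _ := Fintype.ofFinite (MulAction.orbitRel.Quotient (Subgroup.zpowers g) Ω)
  rw [permIndex, mul_tsub, ← card_univ, Nat.card_eq_fintype_card]
  apply le_tsub_of_add_le_right
  rw [card_eq_sum_card_filter_orbitClass g univ, card_eq_sum_card_filter_orbitClass g g.support,
    Fintype.card_eq_sum_ones, mul_sum, mul_sum, ← sum_add_distrib]
  exact sum_le_sum fun q _ ↦
    Quotient.inductionOn' q (card_support_filter_orbitClass_add_two_le g)

end Index

section Binomial

theorem choose_mul_mul_sub (m : ℕ) {k : ℕ} (hk : 0 < k) :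
    m.choose k * (k * (m - k)) = m * (m - 1) * (m - 2).choose (k - 1) := by
  obtain ⟨j, rfl⟩ := Nat.exists_eq_add_of_le' hk
  match m with
  | 0 | 1 => simp
  | p + 2 =>
    calc (p + 2).choose (j + 1) * ((j + 1) * (p + 2 - (j + 1)))
      _ = (p + 2).choose (j + 1) * (j + 1) * (p + 1 - j) := by
          rw [mul_assoc, Nat.add_sub_add_right p.succ 1 j]
      _ = (p + 2) * (p.choose j * (p + 1)) := by
          rw [← Nat.add_one_mul_choose_eq, mul_assoc, ← Nat.choose_mul_succ_eq]
      _ = (p + 2) * (p + 2 - 1) * (p + 2 - 2).choose (j + 1 - 1) := by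
          simp only [Nat.add_sub_cancel, Nat.add_succ_sub_one]
          ring

theorem choose_le_choose_of_add_le {m j k : ℕ} (hjk : j ≤ k) (h : j + k ≤ m) :
    m.choose j ≤ m.choose k := by
  refine Nat.le_of_mul_le_mul_right (?_ : _ * k.choose j ≤ _ * k.choose j) (Nat.choose_pos hjk)
  calc m.choose j * k.choose j
    _ = m.choose j * k.choose (k - j) := by rw [Nat.choose_symm hjk]
    _ ≤ m.choose j * (m - j).choose (k - j) :=
        Nat.mul_le_mul_left _ (Nat.choose_le_choose _ (by omega))
    _ = m.choose k * k.choose j := (Nat.choose_mul hjk).symm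

theorem le_choose {m k : ℕ} (hk : 0 < k) (hkm : k < m) : m ≤ m.choose k :=
  m.choose_one_right.symm.trans_le (choose_le_choose_of_add_le hk (by omega))

theorem sq_add_two_le_nine_mul_two_pow (q : ℕ) : (q + 2) ^ 2 ≤ 9 * 2 ^ q := by
  induction q with
  | zero => norm_num
  | succ n ih =>
    obtain rfl | hn := n.eq_zero_or_pos
    · norm_num
    · rw [pow_succ 2]
      nlinarith

theorem sq_le_nine_mul_choose {m k : ℕ} (hk : 1 < k) (hkm : k + 1 < m) :
    m ^ 2 ≤ 9 * m.choose k := by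
  have htwo : m.choose 2 ≤ m.choose k := choose_le_choose_of_add_le hk (by omega)
  have hpairs : m.choose 2 * 2 = m * (m - 1) := by
    rw [Nat.choose_two_right, Nat.div_mul_cancel (Nat.two_dvd_mul_sub_one m)]
  obtain ⟨p, rfl⟩ := Nat.exists_eq_add_of_le' (show 2 ≤ m by omega)
  rw [Nat.add_succ_sub_one] at hpairs
  nlinarith

theorem sq_mul_le_nine_mul_choose_pow {r m k : ℕ} (hk : 0 < k) (hkm : k < m)
    (h : 1 < r ∨ (1 < k ∧ k + 1 < m)) : (m * r) ^ 2 ≤ 9 * m.choose k ^ r := by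
  have hchoose := le_choose hk hkm
  match r with
  | 0 => simp
  | 1 => simpa using sq_le_nine_mul_choose (h.resolve_left (lt_irrefl 1)).1 (by tauto)
  | q + 2 =>
    calc (m * (q + 2)) ^ 2
      _ = m ^ 2 * (q + 2) ^ 2 := mul_pow _ _ _
      _ ≤ m.choose k ^ 2 * (9 * 2 ^ q) := by gcongr; exact sq_add_two_le_nine_mul_two_pow q
      _ ≤ m.choose k ^ 2 * (9 * m.choose k ^ q) := by gcongr; omega
      _ = 9 * m.choose k ^ (q + 2) := by ring

end Binomial

section Subsets

variable {α : Type*} [Fintype α] [DecidableEq α]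

theorem card_filter_mem_notMem {k : ℕ} (hk : 0 < k) {x y : α} (hxy : x ≠ y) :
    #{S : {S : Finset α // #S = k} | x ∈ S.1 ∧ y ∉ S.1} =
      (Fintype.card α - 2).choose (k - 1) := by
  have himage : ({S : {S : Finset α // #S = k} | x ∈ S.1 ∧ y ∉ S.1} : Finset _).map
      (.subtype _) = {S ∈ powersetCard k (univ.erase y) | {x} ⊆ S} := by
    ext S
    simp [mem_powersetCard, subset_erase, and_comm, and_left_comm]
  rw [← card_map (.subtype _), himage, card_filter_powersetCard_subset _ _ _ (by simpa) (by simpa)]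
  simp [Nat.sub_sub]

theorem card_filter_mem_apply_notMem_le_min (s : Perm α) (S : Finset α) :
    #{x | x ∈ S ∧ s x ∉ S} ≤ min #S #Sᶜ := by
  refine le_min (card_le_card fun x hx ↦ (mem_filter.1 hx).2.1)
    (card_le_card_of_injOn s (fun x hx ↦ ?_) s.injective.injOn)
  exact mem_coe.2 (mem_compl.2 (mem_filter.1 hx).2.2)

theorem mem_support_subsetPerm {m k : ℕ} {s : Perm (Fin m)} {S : {S : Finset (Fin m) // #S = k}}
    {x : Fin m} (hx : x ∈ S.1) (hsx : s x ∉ S.1) : S ∈ (subsetPerm m k s).support := by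
  rw [Perm.mem_support]
  intro hS
  have himage : S.1.map s.toEmbedding = S.1 := congrArg Subtype.val hS
  exact hsx (himage ▸ mem_map_of_mem s.toEmbedding hx)

theorem card_support_mul_choose_le_card_support_subsetPerm_mul_min {m k : ℕ} (hk : 0 < k)
    (s : Perm (Fin m)) :
    #s.support * (m - 2).choose (k - 1) ≤ #(subsetPerm m k s).support * min k (m - k) := by
  refine card_mul_le_card_mul (fun x (S : {S : Finset (Fin m) // #S = k}) ↦ x ∈ S.1 ∧ s x ∉ S.1)
    (fun x hx ↦ ?_) fun S _ ↦ ?_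
  · have hcount := card_filter_mem_notMem hk (Perm.mem_support.1 hx).symm
    rw [Fintype.card_fin] at hcount
    rw [← hcount]
    refine card_le_card fun S hS ↦ ?_
    have hcross := (mem_filter.1 hS).2
    exact (mem_bipartiteAbove _).2 ⟨mem_support_subsetPerm hcross.1 hcross.2, hcross⟩
  · have hcount := card_filter_mem_apply_notMem_le_min s S.1
    rw [card_compl, Fintype.card_fin, S.2] at hcount
    exact (card_le_card (filter_subset_filter _ (subset_univ _))).trans hcount

theorem card_support_mul_choose_le {m k : ℕ} (hk : 0 < k) (hkm : k < m) (s : Perm (Fin m)) :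
    #s.support * m.choose k ≤ 2 * (m - 1) * #(subsetPerm m k s).support := by
  set a := #s.support
  set b := #(subsetPerm m k s).support
  have hcross : a * (m - 2).choose (k - 1) ≤ b * min k (m - k) :=
    card_support_mul_choose_le_card_support_subsetPerm_mul_min hk s
  have hcancel {d e : ℕ} (hd : 0 < d) (hde : k * (m - k) = d * e)
      (hle : a * (m - 2).choose (k - 1) ≤ b * d) : a * m.choose k * e ≤ m * (m - 1) * b := by
    refine Nat.le_of_mul_le_mul_left (?_ : d * _ ≤ d * _) hd
    calc d * (a * m.choose k * e)
      _ = a * (m.choose k * (d * e)) := by ring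
      _ = m * (m - 1) * (a * (m - 2).choose (k - 1)) := by
          rw [← hde, choose_mul_mul_sub m hk]
          ring
      _ ≤ m * (m - 1) * (b * d) := Nat.mul_le_mul_left _ hle
      _ = d * (m * (m - 1) * b) := by ring
  have hsub : a * m.choose k * (m - k) ≤ m * (m - 1) * b :=
    hcancel hk rfl (hcross.trans (Nat.mul_le_mul_left b (min_le_left _ _)))
  have hself : a * m.choose k * k ≤ m * (m - 1) * b :=
    hcancel (Nat.sub_pos_of_lt hkm) (mul_comm _ _)
      (hcross.trans (Nat.mul_le_mul_left b (min_le_right _ _)))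
  refine Nat.le_of_mul_le_mul_left (?_ : m * _ ≤ m * _) (by omega)
  calc m * (a * m.choose k)
    _ = a * m.choose k * (m - k) + a * m.choose k * k := by
        rw [← mul_add, Nat.sub_add_cancel hkm.le, mul_comm]
    _ ≤ m * (m - 1) * b + m * (m - 1) * b := add_le_add hsub hself
    _ = m * (2 * (m - 1) * b) := by ring

end Subsets

section Powers

variable {ι Δ α : Type*}

/-- The product action on `ι → Δ` of the element of `Perm Δ ≀ Perm ι` with base component `ρ` and
top component `τ`: the entry in position `i` is moved by `ρ i` and put in position `τ i`. -/
def productAction (τ : Perm ι) (ρ : ι → Perm Δ) : Perm (ι → Δ) :=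
  Equiv.piCongr τ ρ

theorem productAction_apply_apply (τ : Perm ι) (ρ : ι → Perm Δ) (f : ι → Δ) (i : ι) :
    productAction τ ρ f (τ i) = ρ i (f i) :=
  Equiv.piCongr_apply_apply (W := fun _ ↦ Δ) (Z := fun _ ↦ Δ) τ ρ f i

variable [Fintype ι] [DecidableEq ι] [Fintype Δ] [DecidableEq Δ] [Fintype α] [DecidableEq α]

theorem card_compl_support_productAction_le {τ : Perm ι} {i : ι} (hi : τ i ≠ i)
    (ρ : ι → Perm Δ) :
    #(productAction τ ρ).supportᶜ ≤ Fintype.card Δ ^ (Fintype.card ι - 1) := by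
  have hcard : Fintype.card ({j // j ≠ τ i} → Δ) = Fintype.card Δ ^ (Fintype.card ι - 1) := by
    simp [Fintype.card_subtype_compl]
  rw [← hcard, ← card_univ]
  refine card_le_card_of_injOn (fun f j ↦ f j) (fun _ _ ↦ mem_coe.2 (mem_univ _)) ?_
  intro f hf f' hf' hff'
  have hfix {h : ι → Δ} (hh : h ∈ ((productAction τ ρ).supportᶜ : Finset _)) :
      h (τ i) = ρ i (h i) := by
    rw [mem_compl, Perm.notMem_support] at hh
    rw [← productAction_apply_apply τ, hh]
  have hne (j : ι) (hj : j ≠ τ i) : f j = f' j := congrFun hff' ⟨j, hj⟩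
  funext j
  obtain rfl | hj := eq_or_ne j (τ i)
  · rw [hfix hf, hfix hf', hne i hi.symm]
  · exact hne j hj

theorem card_pow_le_two_mul_card_support_productAction (hΔ : 1 < Fintype.card Δ) {τ : Perm ι}
    (hτ : τ ≠ 1) (ρ : ι → Perm Δ) :
    Fintype.card Δ ^ Fintype.card ι ≤ 2 * #(productAction τ ρ).support := by
  obtain ⟨i, hi⟩ : ∃ i, τ i ≠ i := by simpa [Equiv.ext_iff] using hτ
  have hfixed := card_compl_support_productAction_le hi ρ
  have hsplit := card_add_card_compl (productAction τ ρ).support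
  have hι : Fintype.card ι - 1 + 1 = Fintype.card ι :=
    Nat.sub_add_cancel (Fintype.card_pos_iff.2 ⟨i⟩)
  have hpow : Fintype.card Δ ^ (Fintype.card ι - 1) * 2 ≤ Fintype.card Δ ^ Fintype.card ι := by
    rw [← hι, pow_succ, hι]
    exact Nat.mul_le_mul_left _ hΔ
  rw [Fintype.card_fun] at hsplit
  omega

theorem card_support_mul_card_pow_le_card_support_productAction_one (ρ : ι → Perm Δ) (i : ι) :
    #(ρ i).support * Fintype.card Δ ^ (Fintype.card ι - 1) ≤ #(productAction 1 ρ).support := by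
  have hcard : #(Fintype.piFinset (Function.update (fun _ : ι ↦ (univ : Finset Δ)) i (ρ i).support))
      = #(ρ i).support * Fintype.card Δ ^ (Fintype.card ι - 1) := by
    rw [Fintype.card_piFinset, ← mul_prod_erase _ _ (mem_univ i), Function.update_self,
      prod_congr rfl fun j hj ↦ by rw [Function.update_of_ne (ne_of_mem_erase hj)]]
    simp [card_erase_of_mem]
  rw [← hcard]
  refine card_le_card fun f hf ↦ ?_
  have hfi : f i ∈ (ρ i).support := by simpa using Fintype.mem_piFinset.1 hf i
  rw [Perm.mem_support] at hfi ⊢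
  exact fun h ↦ hfi ((productAction_apply_apply 1 ρ f i).symm.trans (congrFun h i))

theorem card_support_prodShear_one (σ : ι → Perm α) :
    #(Perm.support (Equiv.prodShear 1 σ)) = ∑ i, #(σ i).support := by
  simp only [Perm.support, card_filter, Fintype.sum_prod_type, Equiv.prodShear_apply,
    Perm.one_apply, ne_eq, Prod.mk.injEq, true_and]

end Powers

section Wreath

variable {r m k : ℕ}

theorem wreathOnSets_eq_productAction (σ : Fin r → Perm (Fin m)) (τ : Perm (Fin r)) :
    wreathOnSets r m k σ τ = productAction τ fun i ↦ subsetPerm m k (σ i) :=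
  rfl

theorem card_support_wreathOnLetters_one_mul_le (hk : 0 < k) (hkm : k < m)
    (σ : Fin r → Perm (Fin m)) :
    #(wreathOnLetters r m σ 1).support * m.choose k ^ r ≤
      2 * (m * r) * #(wreathOnSets r m k σ 1).support := by
  set b := #(wreathOnSets r m k σ 1).support with hb
  have hfactor (i : Fin r) : #(σ i).support * m.choose k ^ r ≤ 2 * m * b := by
    have hproduct : #(subsetPerm m k (σ i)).support * m.choose k ^ (r - 1) ≤ b := by
      rw [hb, wreathOnSets_eq_productAction]
      simpa using card_support_mul_card_pow_le_card_support_productAction_one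
        (fun i ↦ subsetPerm m k (σ i)) i
    calc #(σ i).support * m.choose k ^ r
      _ = #(σ i).support * m.choose k * m.choose k ^ (r - 1) := by
          rw [mul_assoc, mul_pow_sub_one i.pos.ne']
      _ ≤ 2 * (m - 1) * #(subsetPerm m k (σ i)).support * m.choose k ^ (r - 1) :=
          Nat.mul_le_mul_right _ (card_support_mul_choose_le hk hkm (σ i))
      _ ≤ 2 * m * b := by
          rw [mul_assoc]
          gcongr
          omega
  calc #(wreathOnLetters r m σ 1).support * m.choose k ^ r
    _ = ∑ i, #(σ i).support * m.choose k ^ r := by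
        rw [wreathOnLetters, card_support_prodShear_one, sum_mul]
    _ ≤ ∑ _ : Fin r, 2 * m * b := sum_le_sum fun i _ ↦ hfactor i
    _ = 2 * (m * r) * b := by
        rw [sum_const, card_univ, Fintype.card_fin, smul_eq_mul]
        ring

theorem card_support_wreathOnLetters_mul_le (hk : 0 < k) (hkm : k < m)
    (σ : Fin r → Perm (Fin m)) (τ : Perm (Fin r)) :
    #(wreathOnLetters r m σ τ).support * m.choose k ^ r ≤
      2 * (m * r) * #(wreathOnSets r m k σ τ).support := by
  obtain rfl | hτ := eq_or_ne τ 1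
  · exact card_support_wreathOnLetters_one_mul_le hk hkm σ
  have hchoose := le_choose hk hkm
  have hletters : #(wreathOnLetters r m σ τ).support ≤ r * m := by
    simpa using card_le_univ (wreathOnLetters r m σ τ).support
  have hsets : m.choose k ^ r ≤ 2 * #(wreathOnSets r m k σ τ).support := by
    rw [wreathOnSets_eq_productAction]
    simpa using card_pow_le_two_mul_card_support_productAction
      (Δ := {S : Finset (Fin m) // #S = k}) (by simp; omega) hτ fun i ↦ subsetPerm m k (σ i)
  calc #(wreathOnLetters r m σ τ).support * m.choose k ^ r
    _ ≤ r * m * (2 * #(wreathOnSets r m k σ τ).support) := Nat.mul_le_mul hletters hsets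
    _ = 2 * (m * r) * #(wreathOnSets r m k σ τ).support := by ring

theorem wreath_index_ratio_sqrt_general (hk : 0 < k) (hkm : k < m)
    (h : 1 < r ∨ (1 < k ∧ k + 1 < m)) (σ : Fin r → Perm (Fin m)) (τ : Perm (Fin r)) :
    √((m.choose k : ℝ) ^ r) * permIndex (wreathOnLetters r m σ τ) ≤
      12 * permIndex (wreathOnSets r m k σ τ) := by
  set n : ℝ := (m.choose k : ℝ) ^ r with hn
  set a := #(wreathOnLetters r m σ τ).support
  set b := #(wreathOnSets r m k σ τ).support
  have hn_pos : 0 < n := pow_pos (by exact_mod_cast Nat.choose_pos hkm.le) r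
  have hletters : (permIndex (wreathOnLetters r m σ τ) : ℝ) ≤ a := by
    exact_mod_cast permIndex_le_card_support _
  have hsets : (b : ℝ) ≤ 2 * permIndex (wreathOnSets r m k σ τ) := by
    exact_mod_cast card_support_le_two_mul_permIndex _
  have hsupport : (a : ℝ) * n ≤ 2 * (m * r) * b := by
    rw [hn]
    exact_mod_cast card_support_wreathOnLetters_mul_le hk hkm σ τ
  have hdegree : (m * r : ℝ) ≤ 3 * √n := by
    refine le_of_sq_le_sq ?_ (by positivity)
    rw [mul_pow _ √n, Real.sq_sqrt hn_pos.le, hn]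
    exact_mod_cast sq_mul_le_nine_mul_choose_pow hk hkm h
  have hratio : √n * a ≤ 6 * b := by
    refine le_of_mul_le_mul_left (?_ : √n * _ ≤ √n * _) (Real.sqrt_pos.2 hn_pos)
    calc √n * (√n * a) = a * n := by rw [← mul_assoc, Real.mul_self_sqrt hn_pos.le, mul_comm]
      _ ≤ 2 * (m * r) * b := hsupport
      _ ≤ 2 * (3 * √n) * b := by gcongr
      _ = √n * (6 * b) := by ring
  calc √n * permIndex (wreathOnLetters r m σ τ) ≤ √n * a := by gcongr
    _ ≤ 6 * b := hratio
    _ ≤ 6 * (2 * permIndex (wreathOnSets r m k σ τ)) := by gcongr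
    _ = 12 * permIndex (wreathOnSets r m k σ τ) := by ring

end Wreath

end WreathIndex

/-- Corollary 2.7 of Bhargava's paper. There is an absolute constant `c > 0` such that
for all positive integers `r, m, k` with `k < m/2` and `r > 1` or `k > 1`, setting
`n = C(m,k)^r`, every non-identity element `g = (σ_1,...,σ_r; τ)` of `S_m ≀ S_r`
satisfies `ind(g) ≥ c·√n·ind'(g)`, where `ind(g)` is the index of `g` on `Ω = Δ^r` and
`ind'(g)` its index on the `rm` letters. -/
theorem wreath_index_ratio_sqrt :
    ∃ c : ℝ, 0 < c ∧ ∀ (r m k : ℕ), 1 ≤ r → 1 ≤ k → 2 * k < m → (1 < r ∨ 1 < k) →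
      ∀ (σ : Fin r → Equiv.Perm (Fin m)) (τ : Equiv.Perm (Fin r)),
        ¬(τ = 1 ∧ ∀ i, σ i = 1) →
        c * Real.sqrt ((Nat.choose m k : ℝ) ^ r) *
            (permIndex (wreathOnLetters r m σ τ) : ℝ) ≤
          (permIndex (wreathOnSets r m k σ τ) : ℝ) := by
  refine ⟨1 / 12, by norm_num, fun r m k _ hk hm hrk σ τ _ ↦ ?_⟩
  have hbound := wreath_index_ratio_sqrt_general (r := r) hk (by omega) (by omega) σ τ
  linarith
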